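/- arXiv:1805.01121 — 2 statements merged into one kernel-verified Lean document; each statement's English description precedes it below -/
import Mathlib

section
/- Let n be a positive integer, let τ be a complex number with Im(τ) > 0, and set q = e^{πiτ}. Then for every complex number z, ∏_{k=0}^{n-1} sin_{q^n}(π(z + k/n)) = q^{(n-1)(n+1)/12} · ((q; q²)_∞)² / ((q^n; q^{2n})_∞)^{2n} · sin_q(nπz), where q^{(n-1)(n+1)/12} denotes e^{πiτ(n-1)(n+1)/12} and sin_{q^n} is formed with parameter nτ (nome q^n = e^{πinτ}). -/
open Complex

/-- Infinite q-Pochhammer symbol `(a; q)_∞ = ∏_{i=0}^∞ (1 - a qⁱ)`. -/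
noncomputable def qPoch (a q : ℂ) : ℂ := ∏' i : ℕ, (1 - a * q ^ i)

/-- Jacobi's first theta function
`θ₁(z | τ) = 2 ∑_{n=0}^∞ (-1)ⁿ e^{πiτ(2n+1)²/4} sin((2n+1)z)`. -/
noncomputable def theta1 (z τ : ℂ) : ℂ :=
  2 * ∑' n : ℕ, (-1 : ℂ) ^ n * Complex.exp (Real.pi * Complex.I * τ * (2 * n + 1) ^ 2 / 4) *
    Complex.sin ((2 * n + 1) * z)

/-- Gosper's q-sine with parameter `τ` (nome `q = e^{πiτ}`):
`sin_q(z) = θ₁(z | -1/τ) / θ₁(π/2 | -1/τ)`. -/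
noncomputable def qSin (τ z : ℂ) : ℂ :=
  theta1 z (-1 / τ) / theta1 ((Real.pi : ℂ) / 2) (-1 / τ)

open Filter Topology

lemma summable_norm_neg_mul_pow (a : ℂ) {q : ℂ} (hq : ‖q‖ < 1) :
    Summable fun i : ℕ ↦ ‖-(a * q ^ i)‖ := by
  simpa using (summable_geometric_of_lt_one (norm_nonneg q) hq).mul_left ‖a‖

lemma multipliable_one_sub_mul_pow (a : ℂ) {q : ℂ} (hq : ‖q‖ < 1) :
    Multipliable fun i : ℕ ↦ 1 - a * q ^ i := by
  simpa [sub_eq_add_neg] using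
    multipliable_one_add_of_summable (summable_norm_neg_mul_pow a hq)

lemma tendsto_prod_range_qPoch (a : ℂ) {q : ℂ} (hq : ‖q‖ < 1) :
    Tendsto (fun N ↦ ∏ i ∈ Finset.range N, (1 - a * q ^ i)) atTop (𝓝 (qPoch a q)) :=
  (multipliable_one_sub_mul_pow a hq).hasProd.tendsto_prod_nat

lemma one_sub_mul_pow_ne_zero {a q : ℂ} (ha : ‖a‖ < 1) (hq : ‖q‖ < 1) (i : ℕ) :
    1 - a * q ^ i ≠ 0 := by
  intro h
  have h1 : ‖a * q ^ i‖ = 1 := by rw [← sub_eq_zero.mp h, norm_one]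
  have h2 : ‖a * q ^ i‖ ≤ ‖a‖ := by
    rw [norm_mul, norm_pow]
    exact mul_le_of_le_one_right (norm_nonneg _) (pow_le_one₀ (norm_nonneg _) hq.le)
  linarith

lemma qPoch_ne_zero {a q : ℂ} (ha : ‖a‖ < 1) (hq : ‖q‖ < 1) : qPoch a q ≠ 0 := by
  have h := tprod_one_add_ne_zero_of_summable (f := fun i : ℕ ↦ -(a * q ^ i))
    (fun i ↦ by simpa [sub_eq_add_neg] using one_sub_mul_pow_ne_zero ha hq i)
    (summable_norm_neg_mul_pow a hq)
  simpa [qPoch, sub_eq_add_neg] using h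

/-- Splitting a q-Pochhammer symbol along residue classes of the index modulo `n`. -/
lemma prod_qPoch_mul_pow (a : ℂ) {q : ℂ} (hq : ‖q‖ < 1) {n : ℕ} (hn : 0 < n) :
    ∏ k ∈ Finset.range n, qPoch (a * q ^ k) (q ^ n) = qPoch a q := by
  have hqn : ‖q ^ n‖ < 1 := by
    rw [norm_pow]; exact pow_lt_one₀ (norm_nonneg _) hq hn.ne'
  have hsub : Tendsto (fun N ↦ ∏ i ∈ Finset.range (N * n), (1 - a * q ^ i)) atTop
      (𝓝 (qPoch a q)) :=
    (tendsto_prod_range_qPoch a hq).comp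
      (tendsto_atTop_mono (fun N ↦ Nat.le_mul_of_pos_right N hn) tendsto_id)
  refine tendsto_nhds_unique
    (tendsto_finsetProd _ fun k _ ↦ tendsto_prod_range_qPoch (a * q ^ k) hqn) (hsub.congr fun N ↦ ?_)
  rw [Finset.prod_comm]
  induction N with
  | zero => simp
  | succ N ih =>
    rw [Finset.prod_range_succ, ← ih, Nat.succ_mul, Finset.prod_range_add]
    congr 1
    refine Finset.prod_congr rfl fun k _ ↦ ?_
    ring

/-- The inverse of the finite q-Pochhammer symbol `(q; q)_m` for `m : ℤ`, with value `0` for `m < 0`. -/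
noncomputable def invQFactorial (q : ℂ) (m : ℤ) : ℂ :=
  if 0 ≤ m then (∏ i ∈ Finset.range m.toNat, (1 - q * q ^ i))⁻¹ else 0

lemma invQFactorial_sub_one {q : ℂ} (hq : ‖q‖ < 1) (m : ℤ) :
    invQFactorial q (m - 1) = (1 - q ^ m) * invQFactorial q m := by
  rcases lt_trichotomy m 0 with h | rfl | h
  · simp [invQFactorial, show ¬ 1 ≤ m by lia, show ¬ 0 ≤ m by lia]
  · simp [invQFactorial]
  · obtain ⟨k, rfl⟩ : ∃ k : ℕ, m = k + 1 := ⟨(m - 1).toNat, by lia⟩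
    have hk : ((k : ℤ) + 1).toNat = k + 1 := by lia
    have h1 := one_sub_mul_pow_ne_zero hq hq k
    have h2 : q ^ ((k : ℤ) + 1) = q * q ^ k := by
      rw [show ((k : ℤ) + 1) = ((k + 1 : ℕ) : ℤ) by simp, zpow_natCast, pow_succ']
    simp only [invQFactorial, add_sub_cancel_right, hk, Finset.prod_range_succ, h2, mul_inv]
    rw [if_pos (by lia), if_pos (by lia)]
    simp only [Int.toNat_natCast]
    field_simp

lemma tendsto_invQFactorial {q : ℂ} (hq : ‖q‖ < 1) :
    Tendsto (fun N : ℕ ↦ invQFactorial q N) atTop (𝓝 (qPoch q q)⁻¹) := by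
  simpa [invQFactorial] using (tendsto_prod_range_qPoch q hq).inv₀ (qPoch_ne_zero hq hq)

lemma tendsto_invQFactorial_add {q : ℂ} (hq : ‖q‖ < 1) (k : ℤ) :
    Tendsto (fun N : ℕ ↦ invQFactorial q (N + k)) atTop (𝓝 (qPoch q q)⁻¹) := by
  have h : Tendsto (fun N : ℕ ↦ ((N : ℤ) + k).toNat) atTop atTop := by
    refine tendsto_atTop_mono (f := fun N : ℕ ↦ N - k.natAbs) (fun N ↦ by lia) ?_
    exact tendsto_sub_atTop_nat _
  refine ((tendsto_invQFactorial hq).comp h).congr' ?_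
  filter_upwards [eventually_ge_atTop k.natAbs] with N hN
  simp only [Function.comp_apply]
  congr 1
  lia

lemma exists_norm_invQFactorial_le {q : ℂ} (hq : ‖q‖ < 1) :
    ∃ B, ∀ m, ‖invQFactorial q m‖ ≤ B := by
  obtain ⟨B, hB⟩ := (tendsto_invQFactorial hq).norm.bddAbove_range
  refine ⟨max B 0, fun m ↦ ?_⟩
  by_cases hm : 0 ≤ m
  · lift m to ℕ using hm
    exact le_max_of_le_left (hB ⟨m, rfl⟩)
  · simp [invQFactorial, hm]

/-- Coefficient of `x ^ k` in `∏_{i<N} (1 + x q^(2i+1)) (1 + x⁻¹ q^(2i+1))`. -/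
noncomputable def tripleProductCoeff (q : ℂ) (N : ℕ) (k : ℤ) : ℂ :=
  (∏ i ∈ Finset.range (2 * N), (1 - q ^ 2 * (q ^ 2) ^ i)) *
    invQFactorial (q ^ 2) (N + k) * invQFactorial (q ^ 2) (N - k) * q ^ (k ^ 2)

lemma tripleProductCoeff_succ {q : ℂ} (hq0 : q ≠ 0) (hq : ‖q‖ < 1) (N : ℕ) (k : ℤ) :
    tripleProductCoeff q (N + 1) k =
      (1 + q ^ (2 * N + 1) * q ^ (2 * N + 1)) * tripleProductCoeff q N k +
        q ^ (2 * N + 1) * (tripleProductCoeff q N (k - 1) + tripleProductCoeff q N (k + 1)) := by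
  have hq2 : ‖q ^ 2‖ < 1 := by
    rw [norm_pow]; exact pow_lt_one₀ (norm_nonneg _) hq two_ne_zero
  set a : ℤ := N + 1 + k with ha
  set b : ℤ := N + 1 - k with hb
  have a1 := invQFactorial_sub_one hq2 a
  have a2 := invQFactorial_sub_one hq2 (a - 1)
  have b1 := invQFactorial_sub_one hq2 b
  have b2 := invQFactorial_sub_one hq2 (b - 1)
  have hc : (((N + 1 : ℕ) : ℤ)) = N + 1 := by simp
  unfold tripleProductCoeff
  rw [hc, ← ha, ← hb, show (N : ℤ) + k = a - 1 by lia, show (N : ℤ) - k = b - 1 by lia,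
    show (N : ℤ) + (k - 1) = a - 1 - 1 by lia, show (N : ℤ) - (k - 1) = b by lia,
    show (N : ℤ) + (k + 1) = a by lia, show (N : ℤ) - (k + 1) = b - 1 - 1 by lia,
    show 2 * (N + 1) = 2 * N + 1 + 1 by ring, Finset.prod_range_succ, Finset.prod_range_succ,
    a2, b2, a1, b1]
  have hu : q ^ k ≠ 0 := zpow_ne_zero _ hq0
  have hv : q ^ N ≠ 0 := pow_ne_zero _ hq0
  have ea : (q ^ 2) ^ a = (q ^ N * q * q ^ k) ^ 2 := by
    rw [ha, zpow_add₀ (pow_ne_zero _ hq0), zpow_add₀ (pow_ne_zero _ hq0), zpow_natCast, zpow_one,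
      ← zpow_natCast q 2, zpow_comm q _ k, zpow_natCast, zpow_natCast, ← pow_mul, mul_comm 2 N,
      pow_mul]
    ring
  have eb : (q ^ 2) ^ b = (q ^ N * q / q ^ k) ^ 2 := by
    rw [hb, zpow_sub₀ (pow_ne_zero _ hq0), zpow_add₀ (pow_ne_zero _ hq0), zpow_natCast, zpow_one,
      ← zpow_natCast q 2, zpow_comm q _ k, zpow_natCast, zpow_natCast, ← pow_mul, mul_comm 2 N,
      pow_mul]
    ring
  have ea' : (q ^ 2) ^ (a - 1) = (q ^ N * q ^ k) ^ 2 := by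
    rw [zpow_sub_one₀ (pow_ne_zero _ hq0), ea]; field_simp
  have eb' : (q ^ 2) ^ (b - 1) = (q ^ N / q ^ k) ^ 2 := by
    rw [zpow_sub_one₀ (pow_ne_zero _ hq0), eb]; field_simp
  have em : q ^ ((k - 1) ^ 2) = q ^ (k ^ 2) * q / (q ^ k) ^ 2 := by
    rw [show (k - 1) ^ 2 = k ^ 2 + 1 - (k + k) by ring, zpow_sub₀ hq0, zpow_add₀ hq0,
      zpow_add₀ hq0, zpow_one, sq (q ^ k)]
  have ep : q ^ ((k + 1) ^ 2) = q ^ (k ^ 2) * q * (q ^ k) ^ 2 := by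
    rw [show (k + 1) ^ 2 = k ^ 2 + 1 + (k + k) by ring, zpow_add₀ hq0, zpow_add₀ hq0,
      zpow_add₀ hq0, zpow_one, sq (q ^ k)]
  rw [ea, eb, ea', eb', em, ep]
  have e0 : q ^ (2 * N + 1) = (q ^ N) ^ 2 * q := by ring
  have e1 : (q ^ 2) ^ (2 * N) = (q ^ N) ^ 4 := by ring
  have e2 : (q ^ 2) ^ (2 * N + 1) = (q ^ N) ^ 4 * q ^ 2 := by ring
  rw [e0, e1, e2]
  generalize q ^ k = u at *
  generalize q ^ N = v at *
  generalize q ^ (k ^ 2) = w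
  field_simp
  ring

/-- The finite form of the Jacobi triple product identity. -/
lemma hasSum_tripleProductCoeff {q x : ℂ} (hq0 : q ≠ 0) (hq : ‖q‖ < 1) (hx : x ≠ 0) (N : ℕ) :
    HasSum (fun k : ℤ ↦ tripleProductCoeff q N k * x ^ k)
      (∏ i ∈ Finset.range N, ((1 + x * q ^ (2 * i + 1)) * (1 + x⁻¹ * q ^ (2 * i + 1)))) := by
  induction N with
  | zero =>
    have h : ∀ k : ℤ, k ≠ 0 → tripleProductCoeff q 0 k * x ^ k = 0 := by
      intro k hk
      rcases lt_or_gt_of_ne hk with h | h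
      · simp [tripleProductCoeff, invQFactorial, h]
      · simp [tripleProductCoeff, invQFactorial, h]
    simpa [tripleProductCoeff, invQFactorial] using hasSum_single 0 h
  | succ N ih =>
    have hm := (Equiv.subRight (1 : ℤ)).hasSum_iff.mpr ih
    have hp := (Equiv.addRight (1 : ℤ)).hasSum_iff.mpr ih
    rw [Finset.prod_range_succ]
    convert! (ih.mul_left (1 + q ^ (2 * N + 1) * q ^ (2 * N + 1))).add
      ((hm.mul_left (q ^ (2 * N + 1) * x)).add (hp.mul_left (q ^ (2 * N + 1) * x⁻¹))) using 1
    · ext k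
      simp only [Function.comp_apply, Equiv.subRight_apply, Equiv.coe_addRight,
        tripleProductCoeff_succ hq0 hq, zpow_sub_one₀ hx, zpow_add_one₀ hx]
      field_simp
    · field_simp
      ring

/-- The Jacobi triple product identity. -/
lemma tsum_zpow_sq_mul_zpow {q x : ℂ} (hq0 : q ≠ 0) (hq : ‖q‖ < 1) (hx : x ≠ 0)
    (hs : Summable fun k : ℤ ↦ q ^ (k ^ 2) * x ^ k) :
    ∑' k : ℤ, q ^ (k ^ 2) * x ^ k =
      qPoch (q ^ 2) (q ^ 2) * (qPoch (-(x * q)) (q ^ 2) * qPoch (-(x⁻¹ * q)) (q ^ 2)) := by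
  have hq2 : ‖q ^ 2‖ < 1 := by
    rw [norm_pow]; exact pow_lt_one₀ (norm_nonneg _) hq two_ne_zero
  set P := qPoch (q ^ 2) (q ^ 2)
  have hP0 : P ≠ 0 := qPoch_ne_zero hq2 hq2
  have hfac : Tendsto (fun N ↦ ∏ i ∈ Finset.range (2 * N), (1 - q ^ 2 * (q ^ 2) ^ i)) atTop
      (𝓝 P) := (tendsto_prod_range_qPoch _ hq2).comp
        (tendsto_id.const_mul_atTop' two_pos)
  obtain ⟨A, hA⟩ := hfac.norm.bddAbove_range
  obtain ⟨B, hB⟩ := exists_norm_invQFactorial_le hq2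
  have hB0 : 0 ≤ B := (norm_nonneg _).trans (hB 0)
  have hsum := tendsto_tsum_of_dominated_convergence (𝓕 := atTop)
    (f := fun N k ↦ tripleProductCoeff q N k * x ^ k)
    (g := fun k ↦ P * P⁻¹ * P⁻¹ * q ^ (k ^ 2) * x ^ k)
    (hs.norm.mul_left (A * B * B))
    (fun k ↦ (((hfac.mul (tendsto_invQFactorial_add hq2 k)).mul
      (tendsto_invQFactorial_add hq2 (-k))).mul_const _).mul_const _)
    (Eventually.of_forall fun N k ↦ by
      have hA' := hA ⟨N, rfl⟩
      have hA0 : 0 ≤ A := (norm_nonneg _).trans hA'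
      rw [tripleProductCoeff, mul_assoc, norm_mul, norm_mul, norm_mul]
      gcongr
      · exact hB _
      · exact hB _)
  have hprod := (tendsto_prod_range_qPoch (-(x * q)) hq2).mul
    (tendsto_prod_range_qPoch (-(x⁻¹ * q)) hq2)
  have := tendsto_nhds_unique hsum (hprod.congr fun N ↦ by
    rw [(hasSum_tripleProductCoeff hq0 hq hx N).tsum_eq, ← Finset.prod_mul_distrib]
    refine Finset.prod_congr rfl fun i _ ↦ ?_
    ring)
  rw [← this, ← tsum_mul_left]
  refine tsum_congr fun k ↦ ?_
  field_simp

lemma norm_exp_pi_mul_I_mul_lt_one {τ : ℂ} (hτ : 0 < τ.im) :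
    ‖cexp (Real.pi * I * τ)‖ < 1 := by
  rw [Complex.norm_exp, Real.exp_lt_one_iff]
  simpa using mul_pos Real.pi_pos hτ

lemma jacobiTheta₂_eq_qPoch (z : ℂ) {τ : ℂ} (hτ : 0 < τ.im) :
    jacobiTheta₂ z τ = qPoch (cexp (Real.pi * I * τ) ^ 2) (cexp (Real.pi * I * τ) ^ 2) *
      (qPoch (-cexp (Real.pi * I * (2 * z + τ))) (cexp (Real.pi * I * τ) ^ 2) *
        qPoch (-cexp (Real.pi * I * (τ - 2 * z))) (cexp (Real.pi * I * τ) ^ 2)) := by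
  have hterm : ∀ k : ℤ, jacobiTheta₂_term k z τ =
      cexp (Real.pi * I * τ) ^ (k ^ 2) * cexp (2 * Real.pi * I * z) ^ k := by
    intro k
    rw [jacobiTheta₂_term, ← exp_int_mul, ← exp_int_mul, ← exp_add]
    congr 1
    push_cast
    ring
  have hs := (summable_jacobiTheta₂_term_iff z τ).mpr hτ
  simp only [hterm] at hs
  rw [jacobiTheta₂, tsum_congr hterm, tsum_zpow_sq_mul_zpow (exp_ne_zero _)
    (norm_exp_pi_mul_I_mul_lt_one hτ) (exp_ne_zero _) hs, ← exp_neg, ← exp_add, ← exp_add]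
  congr 4 <;> ring_nf

lemma theta1_eq_jacobiTheta₂ (z : ℂ) {τ : ℂ} (hτ : 0 < τ.im) :
    theta1 z τ = I * cexp (Real.pi * I * τ / 4 - I * z) *
      jacobiTheta₂ (-z / Real.pi + 1 / 2 + τ / 2) τ := by
  have hpi : (Real.pi : ℂ) ≠ 0 := ofReal_ne_zero.mpr Real.pi_ne_zero
  have h := ((hasSum_jacobiTheta₂_term (-z / Real.pi + 1 / 2 + τ / 2) hτ).mul_left
    (I * cexp (Real.pi * I * τ / 4 - I * z))).nat_add_neg_add_one
  rw [theta1, ← h.tsum_eq, ← tsum_mul_left]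
  refine tsum_congr fun n ↦ ?_
  have hpow : (-1 : ℂ) ^ n = cexp (Real.pi * I * n) := by
    rw [← exp_pi_mul_I, ← exp_nat_mul]; ring_nf
  have hpow' : cexp (-(Real.pi * I * (n + 1))) = -(-1 : ℂ) ^ n := by
    rw [exp_neg, mul_add, exp_add, ← hpow, mul_one, exp_pi_mul_I, mul_neg_one, inv_neg]
    rcases neg_one_pow_eq_or ℂ n with h | h <;> simp [h]
  have e1 : cexp (Real.pi * I * τ / 4 - I * z) *
      jacobiTheta₂_term n (-z / Real.pi + 1 / 2 + τ / 2) τ =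
      (-1) ^ n * cexp (Real.pi * I * τ * (2 * n + 1) ^ 2 / 4) * cexp (-((2 * n + 1) * z) * I) := by
    rw [jacobiTheta₂_term, hpow, ← exp_add, ← exp_add, ← exp_add]
    congr 1
    push_cast
    field_simp
    ring
  have e2 : cexp (Real.pi * I * τ / 4 - I * z) *
      jacobiTheta₂_term (-(n + 1)) (-z / Real.pi + 1 / 2 + τ / 2) τ =
      -(-1) ^ n * cexp (Real.pi * I * τ * (2 * n + 1) ^ 2 / 4) * cexp (((2 * n + 1) * z) * I) := by
    rw [jacobiTheta₂_term, ← hpow', ← exp_add, ← exp_add, ← exp_add]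
    congr 1
    push_cast
    field_simp
    ring
  rw [mul_assoc I, mul_assoc I, e1, e2, Complex.sin]
  ring

/-- The value of `θ₁` at `-1/τ` as an infinite product in the nome of `τ`. -/
lemma theta1_neg_inv {τ : ℂ} (hτ : 0 < τ.im) (x : ℂ) :
    theta1 (Real.pi * x) (-1 / τ) =
      (-I * τ) ^ (1 / 2 : ℂ) * qPoch (cexp (Real.pi * I * τ) ^ 2) (cexp (Real.pi * I * τ) ^ 2) *
      (cexp (Real.pi * I * τ * (x - 1 / 2) ^ 2) *
        qPoch (cexp (Real.pi * I * τ * (2 - 2 * x))) (cexp (Real.pi * I * τ) ^ 2) *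
        qPoch (cexp (Real.pi * I * τ * (2 * x))) (cexp (Real.pi * I * τ) ^ 2)) := by
  have hpi : (Real.pi : ℂ) ≠ 0 := ofReal_ne_zero.mpr Real.pi_ne_zero
  have hτ0 : τ ≠ 0 := by rintro rfl; simp at hτ
  have hτ' : 0 < (-1 / τ).im := by
    rw [neg_div, neg_im, one_div, inv_im, neg_div, neg_neg]
    exact div_pos hτ (normSq_pos.mpr hτ0)
  have hroot : (-I * τ) ^ (1 / 2 : ℂ) ≠ 0 := by
    simp [cpow_eq_zero_iff, hτ0]
  have hfe := jacobiTheta₂_functional_equation (τ * (1 / 2 - x) - 1 / 2) τ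
  have harg : (τ * (1 / 2 - x) - 1 / 2) / τ =
      -(Real.pi * x) / Real.pi + 1 / 2 + -1 / τ / 2 := by
    field_simp
    ring
  rw [harg, jacobiTheta₂_eq_qPoch _ hτ] at hfe
  have e1 : -cexp (Real.pi * I * (2 * (τ * (1 / 2 - x) - 1 / 2) + τ)) =
      cexp (Real.pi * I * τ * (2 - 2 * x)) := by
    rw [← neg_one_mul, ← exp_pi_mul_I, ← exp_add]
    ring_nf
  have e2 : -cexp (Real.pi * I * (τ - 2 * (τ * (1 / 2 - x) - 1 / 2))) =
      cexp (Real.pi * I * τ * (2 * x)) := by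
    rw [← neg_one_mul, ← exp_neg_pi_mul_I, ← exp_add]
    ring_nf
  rw [e1, e2] at hfe
  rw [theta1_eq_jacobiTheta₂ _ hτ']
  have hexp : I * cexp (Real.pi * I * (-1 / τ) / 4 - I * (Real.pi * x)) =
      cexp (Real.pi * I * τ * (x - 1 / 2) ^ 2) *
        cexp (-Real.pi * I * (τ * (1 / 2 - x) - 1 / 2) ^ 2 / τ) := by
    nth_rewrite 1 [← exp_pi_div_two_mul_I]
    rw [← exp_add, ← exp_add]
    congr 1
    field_simp
    ring
  rw [hexp]
  generalize jacobiTheta₂ _ _ = J at *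
  linear_combination (-(-I * τ) ^ (1 / 2 : ℂ) * cexp (Real.pi * I * τ * (x - 1 / 2) ^ 2)) * hfe
    - cexp (Real.pi * I * τ * (x - 1 / 2) ^ 2) *
      cexp (-Real.pi * I * (τ * (1 / 2 - x) - 1 / 2) ^ 2 / τ) * J * mul_one_div_cancel hroot

lemma qPoch_exp_ne_zero {τ : ℂ} (hτ : 0 < τ.im) :
    qPoch (cexp (Real.pi * I * τ)) (cexp (Real.pi * I * τ) ^ 2) ≠ 0 := by
  have hq := norm_exp_pi_mul_I_mul_lt_one hτ
  refine qPoch_ne_zero hq ?_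
  rw [norm_pow]
  exact pow_lt_one₀ (norm_nonneg _) hq two_ne_zero

/-- Gosper's product formula for the q-sine. -/
lemma qSin_pi_mul {τ : ℂ} (hτ : 0 < τ.im) (x : ℂ) :
    qSin τ (Real.pi * x) = cexp (Real.pi * I * τ * (x - 1 / 2) ^ 2) *
        qPoch (cexp (Real.pi * I * τ * (2 - 2 * x))) (cexp (Real.pi * I * τ) ^ 2) *
        qPoch (cexp (Real.pi * I * τ * (2 * x))) (cexp (Real.pi * I * τ) ^ 2) /
        qPoch (cexp (Real.pi * I * τ)) (cexp (Real.pi * I * τ) ^ 2) ^ 2 := by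
  have hτ0 : τ ≠ 0 := by rintro rfl; simp at hτ
  have hroot : (-I * τ) ^ (1 / 2 : ℂ) ≠ 0 := by
    simp [cpow_eq_zero_iff, hτ0]
  have hq2 : ‖cexp (Real.pi * I * τ) ^ 2‖ < 1 := by
    rw [norm_pow]
    exact pow_lt_one₀ (norm_nonneg _) (norm_exp_pi_mul_I_mul_lt_one hτ) two_ne_zero
  rw [qSin, theta1_neg_inv hτ, show (Real.pi : ℂ) / 2 = Real.pi * (1 / 2) by ring,
    theta1_neg_inv hτ, mul_div_mul_left _ _ (mul_ne_zero hroot (qPoch_ne_zero hq2 hq2))]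
  congr 1
  norm_num
  ring

lemma sum_range_sq_add_div_sub_half (z : ℂ) {n : ℕ} (hn : 0 < n) :
    ∑ k ∈ Finset.range n, (n : ℂ) * (z + k / n - 1 / 2) ^ 2 =
      ((n : ℂ) - 1) * (n + 1) / 12 + (n * z - 1 / 2) ^ 2 := by
  have hn0 : (n : ℂ) ≠ 0 := Nat.cast_ne_zero.mpr hn.ne'
  have h : ∀ c : ℂ, ∀ m : ℕ, ∑ k ∈ Finset.range m, (c + k) ^ 2 =
      m * c ^ 2 + c * m * (m - 1) + m * (m - 1) * (2 * m - 1) / 6 := by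
    intro c m
    induction m with
    | zero => simp
    | succ m ih => rw [Finset.sum_range_succ, ih]; push_cast; ring
  have hk : ∀ k ∈ Finset.range n, (n : ℂ) * (z + k / n - 1 / 2) ^ 2 =
      (n : ℂ)⁻¹ * (n * z - n / 2 + k) ^ 2 := fun k _ ↦ by
    field_simp
    ring
  rw [Finset.sum_congr rfl hk, ← Finset.mul_sum, h]
  field_simp
  ring

theorem gosper_sine_product (n : ℕ) (hn : 0 < n) (τ : ℂ) (hτ : 0 < τ.im)
    (q : ℂ) (hq : q = Complex.exp (Real.pi * Complex.I * τ)) (z : ℂ) :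
    ∏ k ∈ Finset.range n, qSin ((n : ℂ) * τ) ((Real.pi : ℂ) * (z + (k : ℂ) / n)) =
      Complex.exp (Real.pi * Complex.I * τ * ((n : ℂ) - 1) * ((n : ℂ) + 1) / 12) *
        (qPoch q (q ^ 2)) ^ 2 / (qPoch (q ^ n) (q ^ (2 * n))) ^ (2 * n) *
        qSin τ ((n : ℂ) * Real.pi * z) := by
  have hn0 : (n : ℂ) ≠ 0 := Nat.cast_ne_zero.mpr hn.ne'
  have hnτ : 0 < ((n : ℂ) * τ).im := by simpa using mul_pos (Nat.cast_pos.mpr hn) hτ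
  have hq2 : ‖q ^ 2‖ < 1 := by
    rw [norm_pow, hq]
    exact pow_lt_one₀ (norm_nonneg _) (norm_exp_pi_mul_I_mul_lt_one hτ) two_ne_zero
  have hqn : cexp (Real.pi * I * (n * τ)) = q ^ n := by
    rw [hq, ← exp_nat_mul]; ring_nf
  have hq2n : (q ^ n) ^ 2 = (q ^ 2) ^ n := by rw [← pow_mul, ← pow_mul, mul_comm]
  have hq2n' : q ^ (2 * n) = (q ^ 2) ^ n := pow_mul q 2 n
  have hne : qPoch q (q ^ 2) ≠ 0 := hq ▸ qPoch_exp_ne_zero hτ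
  have hqk : ∀ k : ℕ, (q ^ 2) ^ k = cexp (Real.pi * I * τ * (2 * k)) := by
    intro k
    rw [hq, ← exp_nat_mul, ← exp_nat_mul]; push_cast; ring_nf
  have hA : ∏ k ∈ Finset.range n,
      qPoch (cexp (Real.pi * I * (n * τ) * (2 - 2 * (z + k / n)))) ((q ^ 2) ^ n) =
      qPoch (cexp (Real.pi * I * τ * (2 - 2 * (n * z)))) (q ^ 2) := by
    rw [← prod_qPoch_mul_pow _ hq2 hn, ← Finset.prod_range_reflect]
    refine Finset.prod_congr rfl fun k hk ↦ ?_
    have hcast : ((n - 1 - k : ℕ) : ℂ) = n - 1 - k := by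
      rw [Finset.mem_range] at hk
      rw [Nat.cast_sub (by lia), Nat.cast_sub (by lia), Nat.cast_one]
    rw [hqk k, hcast, ← exp_add]
    congr 2
    field_simp
    ring
  have hB : ∏ k ∈ Finset.range n,
      qPoch (cexp (Real.pi * I * (n * τ) * (2 * (z + k / n)))) ((q ^ 2) ^ n) =
      qPoch (cexp (Real.pi * I * τ * (2 * (n * z)))) (q ^ 2) := by
    rw [← prod_qPoch_mul_pow _ hq2 hn]
    refine Finset.prod_congr rfl fun k _ ↦ ?_
    rw [hqk k, ← exp_add]
    congr 2
    field_simp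
  have hE : ∏ k ∈ Finset.range n, cexp (Real.pi * I * (n * τ) * (z + k / n - 1 / 2) ^ 2) =
      cexp (Real.pi * I * τ * ((n : ℂ) - 1) * ((n : ℂ) + 1) / 12) *
        cexp (Real.pi * I * τ * (n * z - 1 / 2) ^ 2) := by
    rw [← exp_sum, ← exp_add]
    congr 1
    calc _ = Real.pi * I * τ * ∑ k ∈ Finset.range n, (n : ℂ) * (z + k / n - 1 / 2) ^ 2 := by
          rw [Finset.mul_sum]; exact Finset.sum_congr rfl fun k _ ↦ by ring
      _ = _ := by rw [sum_range_sq_add_div_sub_half z hn]; ring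
  simp only [qSin_pi_mul hnτ, show (n : ℂ) * Real.pi * z = Real.pi * (n * z) by ring,
    qSin_pi_mul hτ, ← hq, hqn, hq2n, hq2n', Finset.prod_div_distrib, Finset.prod_mul_distrib,
    hA, hB, hE, Finset.prod_const, Finset.card_range]
  rw [← pow_mul]
  field_simp
end

section
/- Let n be a positive integer and let q be a real number with 0 < q < 1. Then ∏_{k=1}^{n-1} Γ_q(k/n) = (Γ_q(1/2))^{n-1} · ((q^{1/2}; q)_∞)^{n-1} (q; q)_∞ / (q^{1/n}; q^{1/n})_∞. -/
/-- Infinite q-Pochhammer symbol `(a; q)_∞ = ∏_{i=0}^∞ (1 - a qⁱ)` (real version). -/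
noncomputable def qPochR (a q : ℝ) : ℝ := ∏' i : ℕ, (1 - a * q ^ i)

/-- The q-gamma function `Γ_q(z) = ((q;q)_∞ / (q^z;q)_∞) (1-q)^{1-z}` for `0 < q < 1`. -/
noncomputable def qGamma (q z : ℝ) : ℝ :=
  qPochR q q / qPochR (q ^ z) q * (1 - q) ^ (1 - z)

theorem summable_neg_mul_pow (a : ℝ) {q : ℝ} (hq0 : 0 < q) (hq1 : q < 1) :
    Summable fun i : ℕ => -(a * q ^ i) :=
  ((summable_geometric_of_lt_one hq0.le hq1).mul_left a).neg

theorem multipliable_qPochR (a : ℝ) {q : ℝ} (hq0 : 0 < q) (hq1 : q < 1) :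
    Multipliable fun i : ℕ => 1 - a * q ^ i := by
  simpa [sub_eq_add_neg] using
    Real.multipliable_one_add_of_summable (summable_neg_mul_pow a hq0 hq1)

theorem qPochR_ne_zero {a q : ℝ} (ha0 : 0 < a) (ha1 : a < 1) (hq0 : 0 < q) (hq1 : q < 1) :
    qPochR a q ≠ 0 := by
  have h := tprod_one_add_ne_zero_of_summable (f := fun i : ℕ => -(a * q ^ i))
    (fun i => by
      have : a * q ^ i < 1 :=
        mul_lt_one_of_nonneg_of_lt_one_left ha0.le ha1 (pow_le_one₀ hq0.le hq1.le)
      linarith)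
    (summable_neg_mul_pow a hq0 hq1).norm
  simpa [qPochR, sub_eq_add_neg] using h

theorem prod_range_mul_eq_prod_residues {M : Type*} [CommMonoid M] (f : ℕ → M) (n m : ℕ) :
    ∏ i ∈ Finset.range (n * m), f i =
      ∏ k ∈ Finset.range n, ∏ j ∈ Finset.range m, f (n * j + k) := by
  rw [Finset.prod_comm]
  induction m with
  | zero => simp
  | succ m ih => rw [Nat.mul_succ, Finset.prod_range_add, ih, Finset.prod_range_succ]

/-- Splitting `(a; p)_∞` according to the residue of the index modulo `n`. -/
theorem qPochR_eq_prod_residues (a : ℝ) {p : ℝ} (hp0 : 0 < p) (hp1 : p < 1) {n : ℕ} (hn : 0 < n) :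
    qPochR a p = ∏ k ∈ Finset.range n, qPochR (a * p ^ k) (p ^ n) := by
  have hpn : p ^ n < 1 := pow_lt_one₀ hp0.le hp1 hn.ne'
  have hleft := (multipliable_qPochR a hp0 hp1).hasProd.tendsto_prod_nat.comp
    (Filter.tendsto_id.const_mul_atTop' hn)
  have hright := tendsto_finsetProd (Finset.range n) fun k _ =>
    (multipliable_qPochR (a * p ^ k) (pow_pos hp0 n) hpn).hasProd.tendsto_prod_nat
  refine tendsto_nhds_unique hleft (hright.congr fun m => ?_)
  simp only [Function.comp_apply, id, prod_range_mul_eq_prod_residues]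
  refine Finset.prod_congr rfl fun k _ => Finset.prod_congr rfl fun j _ => ?_
  rw [pow_add, pow_mul]
  ring

theorem prod_qPochR_rpow_div {n : ℕ} (hn : 0 < n) {q : ℝ} (hq0 : 0 < q) (hq1 : q < 1) :
    (∏ k ∈ Finset.Icc 1 (n - 1), qPochR (q ^ ((k : ℝ) / n)) q) * qPochR q q =
      qPochR (q ^ ((1 : ℝ) / n)) (q ^ ((1 : ℝ) / n)) := by
  obtain ⟨m, rfl⟩ : ∃ m, n = m + 1 := ⟨n - 1, by omega⟩
  have hpow (k : ℕ) :
      (q ^ ((1 : ℝ) / (m + 1 : ℕ))) ^ k = q ^ ((k : ℝ) / (m + 1 : ℕ)) := by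
    rw [← Real.rpow_natCast, ← Real.rpow_mul hq0.le]
    ring_nf
  have hpn : (q ^ ((1 : ℝ) / (m + 1 : ℕ))) ^ (m + 1) = q := by
    rw [hpow, div_self (by positivity), Real.rpow_one]
  rw [qPochR_eq_prod_residues (q ^ ((1 : ℝ) / (m + 1 : ℕ))) (by positivity)
    (Real.rpow_lt_one hq0.le hq1 (by positivity)) hn]
  simp only [← pow_succ', hpn]
  rw [Finset.prod_range_succ, hpn, Nat.add_sub_cancel, Finset.range_eq_Ico,
    Finset.prod_Ico_add' (fun k => qPochR ((q ^ ((1 : ℝ) / (m + 1 : ℕ))) ^ k) q) 0 m 1]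
  simp only [hpow]
  rfl

theorem prod_rpow_one_sub_div {b : ℝ} (hb : 0 < b) {n : ℕ} (hn : 0 < n) :
    ∏ k ∈ Finset.Icc 1 (n - 1), b ^ (1 - (k : ℝ) / n) = (b ^ (1 - (1 : ℝ) / 2)) ^ (n - 1) := by
  rw [← Real.rpow_sum_of_pos hb, ← Real.rpow_natCast, ← Real.rpow_mul hb.le]
  congr 1
  have hsum (m : ℕ) : ∑ k ∈ Finset.Icc 1 m, (k : ℝ) = m * (m + 1) / 2 := by
    induction m with
    | zero => simp
    | succ m ih =>
      rw [Finset.sum_Icc_succ_top (by omega), ih]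
      push_cast
      ring
  obtain ⟨m, rfl⟩ : ∃ m, n = m + 1 := ⟨n - 1, by omega⟩
  rw [Finset.sum_sub_distrib, ← Finset.sum_div, Nat.add_sub_cancel, hsum]
  simp
  field_simp

theorem q_gauss_multiplication_special (n : ℕ) (hn : 0 < n) (q : ℝ)
    (hq0 : 0 < q) (hq1 : q < 1) :
    ∏ k ∈ Finset.Icc 1 (n - 1), qGamma q ((k : ℝ) / n) =
      (qGamma q (1 / 2)) ^ (n - 1) * (qPochR (q ^ ((1 : ℝ) / 2)) q) ^ (n - 1) *
        qPochR q q / qPochR (q ^ ((1 : ℝ) / n)) (q ^ ((1 : ℝ) / n)) := by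
  have hhalf : qPochR (q ^ ((1 : ℝ) / 2)) q ≠ 0 :=
    qPochR_ne_zero (by positivity) (Real.rpow_lt_one hq0.le hq1 (by norm_num)) hq0 hq1
  have hqq : qPochR q q ≠ 0 := qPochR_ne_zero hq0 hq1 hq0 hq1
  rw [← prod_qPochR_rpow_div hn hq0 hq1, mul_div_mul_right _ _ hqq, ← mul_pow]
  simp only [qGamma]
  rw [Finset.prod_mul_distrib, Finset.prod_div_distrib, prod_rpow_one_sub_div (by linarith) hn,
    Finset.prod_const, Nat.card_Icc, Nat.add_sub_cancel, div_mul_eq_mul_div, ← mul_pow]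
  congr 2
  field_simp
end
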